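/- arXiv:0805.1664 — 13 statements merged into one kernel-verified Lean document; each statement's English description precedes it below -/
import Mathlib

section
/- (Mapping Theorem) Let f : (Fin ℓ → ℝ) → ℂ be multiaffine and let a, b : Fin ℓ → ℝ satisfy a i ≤ b i for all i. Then convexHull ℝ (f '' Set.Icc a b) = convexHull ℝ (f '' {v | ∀ i, v i = a i ∨ v i = b i}); that is, the convex hull of the value set over the box equals the convex hull of the images of the 2^ℓ vertices of the box. -/
/-- If `f` is affine in each coordinate and all coordinates of the box point `q` outside `s` are
endpoints, then `f q` lies in the convex hull of the images of the vertices of the box. -/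
theorem apply_mem_convexHull_image_vertices {ι E : Type*} [DecidableEq ι] [AddCommGroup E]
    [Module ℝ E] {f : (ι → ℝ) → E}
    (hf : ∀ (i : ι) (q : ι → ℝ), ∃ c d : E, ∀ t : ℝ, f (Function.update q i t) = t • c + d)
    {a b : ι → ℝ} (hab : ∀ i, a i ≤ b i) (s : Finset ι) :
    ∀ q ∈ Set.Icc a b, (∀ i ∉ s, q i = a i ∨ q i = b i) →
      f q ∈ convexHull ℝ (f '' {v : ι → ℝ | ∀ i, v i = a i ∨ v i = b i}) := by
  induction s using Finset.induction_on with
  | empty =>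
    intro q _ hq
    exact subset_convexHull ℝ _ ⟨q, fun i => hq i (Finset.notMem_empty i), rfl⟩
  | insert i s _ ih =>
    intro q hqab hq
    have endpoint_mem (t : ℝ) (ht : t = a i ∨ t = b i) :
        f (Function.update q i t) ∈
          convexHull ℝ (f '' {v : ι → ℝ | ∀ i, v i = a i ∨ v i = b i}) := by
      refine ih _ ⟨fun j => ?_, fun j => ?_⟩ fun j hj => ?_
      all_goals
        have h₁ := hqab.1 j
        have h₂ := hqab.2 j
        have h₃ := hab j
        have h₄ := hq j
        by_cases hji : j = i
        · subst hji
          rw [Function.update_self]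
          grind
        · rw [Function.update_of_ne hji]
          grind
    obtain ⟨c, d, hcd⟩ := hf i q
    have hqi : q i ∈ segment ℝ (a i) (b i) := by
      rw [segment_eq_Icc (hab i)]
      exact ⟨hqab.1 i, hqab.2 i⟩
    obtain ⟨x, y, hx, hy, hxy, hqi⟩ := hqi
    have hfq : f q = x • f (Function.update q i (a i)) + y • f (Function.update q i (b i)) := by
      conv_lhs => rw [← Function.update_eq_self i q, hcd, ← hqi]
      rw [hcd, hcd, ← one_smul ℝ d, ← hxy]
      simp only [smul_eq_mul]
      obtain rfl : y = 1 - x := by linarith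
      module
    rw [hfq]
    exact convex_convexHull ℝ _ (endpoint_mem _ (.inl rfl)) (endpoint_mem _ (.inr rfl)) hx hy hxy

/-- **Mapping Theorem.** For a multiaffine map `f : (Fin ℓ → ℝ) → ℂ` and a box
`Set.Icc a b` (pointwise order, `a i ≤ b i`), the convex hull of the value set of the
box equals the convex hull of the images of the `2^ℓ` vertices of the box. -/
theorem mapping_theorem (ℓ : ℕ) (f : (Fin ℓ → ℝ) → ℂ)
    (hf : ∀ (i : Fin ℓ) (q : Fin ℓ → ℝ), ∃ c d : ℂ,
      ∀ t : ℝ, f (Function.update q i t) = t • c + d)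
    (a b : Fin ℓ → ℝ) (hab : ∀ i, a i ≤ b i) :
    convexHull ℝ (f '' Set.Icc a b) =
      convexHull ℝ (f '' {v : Fin ℓ → ℝ | ∀ i, v i = a i ∨ v i = b i}) := by
  apply Set.Subset.antisymm
  · refine convexHull_min ?_ (convex_convexHull ℝ _)
    rintro _ ⟨q, hq, rfl⟩
    exact apply_mem_convexHull_image_vertices hf hab Finset.univ q hq
      fun i hi => absurd (Finset.mem_univ i) hi
  · refine convexHull_mono (Set.image_mono fun v hv => ⟨fun i => ?_, fun i => ?_⟩)
    · rcases hv i with h | h <;> simp [h, hab i]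
    · rcases hv i with h | h <;> simp [h, hab i]
end

section
/- (Validity of the vertex-based lower bound) Let f : (Fin ℓ → ℝ) → ℂ be multiaffine, let a, b : Fin ℓ → ℝ satisfy a i ≤ b i for all i, let q⁰ : Fin ℓ → ℝ and κ ≥ 0. If 0 ∈ f '' (κ-inflation of Set.Icc a b about q⁰), then 0 ∈ convexHull ℝ (f '' (κ-inflation about q⁰ of the vertex set {v | ∀ i, v i = a i ∨ v i = b i})). -/
/-- A multiaffine function maps every point of a box into the convex hull of its values at the
vertices of the box. -/
theorem multiaffine_mem_convexHull_image_vertices {ι E : Type*} [Fintype ι] [DecidableEq ι]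
    [AddCommGroup E] [Module ℝ E] (g : (ι → ℝ) → E)
    (hg : ∀ (i : ι) (q : ι → ℝ), ∃ c d : E, ∀ t : ℝ, g (Function.update q i t) = t • c + d)
    (a b : ι → ℝ) {q : ι → ℝ} (hq : q ∈ Set.Icc a b) :
    g q ∈ convexHull ℝ (g '' {v : ι → ℝ | ∀ i, v i = a i ∨ v i = b i}) := by
  -- Induct on a set `S` of coordinates outside of which `q` already agrees with a vertex.
  suffices H : ∀ (S : Finset ι) (q : ι → ℝ), (∀ i ∈ S, q i ∈ Set.Icc (a i) (b i)) →
      (∀ i ∉ S, q i = a i ∨ q i = b i) →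
      g q ∈ convexHull ℝ (g '' {v : ι → ℝ | ∀ i, v i = a i ∨ v i = b i}) from
    H Finset.univ q (fun i _ => ⟨hq.1 i, hq.2 i⟩) (by simp)
  intro S
  induction S using Finset.induction_on with
  | empty =>
    intro q _ hv
    exact subset_convexHull ℝ _ ⟨q, fun i => hv i (by simp), rfl⟩
  | insert i S hi ih =>
    intro q hbox hv
    have hmem : ∀ x : ℝ, x = a i ∨ x = b i → g (Function.update q i x) ∈
        convexHull ℝ (g '' {v : ι → ℝ | ∀ i, v i = a i ∨ v i = b i}) := by
      intro x hx
      refine ih _ (fun j hj => ?_) (fun j hj => ?_)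
      · rw [Function.update_of_ne (ne_of_mem_of_not_mem hj hi)]
        exact hbox j (Finset.mem_insert_of_mem hj)
      · rcases eq_or_ne j i with rfl | hji
        · simpa using hx
        · rw [Function.update_of_ne hji]
          exact hv j (by simp [hji, hj])
    have hseg : q i ∈ segment ℝ (a i) (b i) :=
      Icc_subset_segment (hbox i (Finset.mem_insert_self i S))
    obtain ⟨u, v, hu, hv, huv, hqi⟩ := hseg
    obtain ⟨c, d, hcd⟩ := hg i q
    have hgq : g q = u • g (Function.update q i (a i)) + v • g (Function.update q i (b i)) := by
      have hq := hcd (q i)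
      rw [Function.update_eq_self] at hq
      rw [hq, hcd, hcd, ← hqi]
      have hd : d = (u + v) • d := by rw [huv, one_smul]
      nth_rewrite 1 [hd]
      simp only [smul_eq_mul]
      module
    rw [hgq]
    exact convex_convexHull ℝ _ (hmem _ (Or.inl rfl)) (hmem _ (Or.inr rfl)) hu hv huv

/-- **Validity of the vertex-based lower bound.** If the value set of the `κ`-inflated box
contains the origin, then so does the convex hull of the images of the `κ`-inflated
vertices of the box (for `f` multiaffine). -/
theorem vertex_lower_bound_valid (ℓ : ℕ) (f : (Fin ℓ → ℝ) → ℂ)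
    (hf : ∀ (i : Fin ℓ) (q : Fin ℓ → ℝ), ∃ c d : ℂ,
      ∀ t : ℝ, f (Function.update q i t) = t • c + d)
    (a b : Fin ℓ → ℝ) (hab : ∀ i, a i ≤ b i)
    (q₀ : Fin ℓ → ℝ) (κ : ℝ) (hκ : 0 ≤ κ)
    (h : (0 : ℂ) ∈ f '' ((fun q => q₀ + κ • (q - q₀)) '' Set.Icc a b)) :
    (0 : ℂ) ∈ convexHull ℝ
      (f '' ((fun q => q₀ + κ • (q - q₀)) '' {v : Fin ℓ → ℝ | ∀ i, v i = a i ∨ v i = b i})) := by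
  rw [Set.image_image] at h ⊢
  obtain ⟨q, hq, hq0⟩ := h
  rw [← hq0]
  refine multiaffine_mem_convexHull_image_vertices (fun q => f (q₀ + κ • (q - q₀)))
    (fun i q => ?_) a b hq
  obtain ⟨c, d, hcd⟩ := hf i (q₀ + κ • (q - q₀))
  refine ⟨κ • c, (q₀ i - κ * q₀ i) • c + d, fun t => ?_⟩
  have hupdate : q₀ + κ • (Function.update q i t - q₀) =
      Function.update (q₀ + κ • (q - q₀)) i (q₀ i + κ * (t - q₀ i)) := by
    ext j
    rcases eq_or_ne j i with rfl | hji
    · simp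
    · simp [hji]
  simp only [hupdate, hcd]
  module
end

section
/- (k_l = k_m when the critical vertices differ in at most one coordinate) Let f : (Fin ℓ → ℝ) → ℂ be multiaffine, let Q = Set.Icc a b with a i ≤ b i for all i, let q⁰ ∈ Q and k ≥ 0. Suppose u and v are vertices of Q differing in at most one coordinate such that 0 ∈ segment ℝ (f (q⁰ + k • (u − q⁰))) (f (q⁰ + k • (v − q⁰))). Then 0 ∈ f '' (k-inflation of Q about q⁰), and moreover 0 ∈ f '' (κ-inflation of Q about q⁰) for every κ ≥ k. -/
/-- A map that is affine in the `i`-th coordinate preserves affine combinations of two points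
agreeing off `i`. -/
theorem map_combo_of_affine_in_coordinate {ι E : Type*} [DecidableEq ι] [AddCommGroup E]
    [Module ℝ E] {f : (ι → ℝ) → E} {i : ι} {x y : ι → ℝ}
    (hf : ∃ c d : E, ∀ t : ℝ, f (Function.update x i t) = t • c + d)
    (hxy : ∀ j, j ≠ i → x j = y j) {s t : ℝ} (hst : s + t = 1) :
    f (s • x + t • y) = s • f x + t • f y := by
  obtain ⟨c, d, h⟩ := hf
  have hx : f x = x i • c + d := by rw [← h, Function.update_eq_self]
  have hy : f y = y i • c + d := by
    rw [← h]
    congr 1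
    exact Function.eq_update_iff.2 ⟨rfl, fun j hj => (hxy j hj).symm⟩
  have hz : f (s • x + t • y) = (s * x i + t * y i) • c + d := by
    rw [← h]
    congr 1
    refine Function.eq_update_iff.2 ⟨by simp, fun j hj => ?_⟩
    simp only [Pi.add_apply, Pi.smul_apply, smul_eq_mul, ← hxy j hj]
    rw [← add_mul, hst, one_mul]
  obtain rfl : t = 1 - s := by linarith
  rw [hx, hy, hz]
  module

/-- Inflations of a convex set about one of its points are monotone in the inflation factor. -/
theorem Convex.image_inflation_subset {E : Type*} [AddCommGroup E] [Module ℝ E] {S : Set E}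
    (hS : Convex ℝ S) {p : E} (hp : p ∈ S) {k κ : ℝ} (hk : 0 ≤ k) (hκ : k ≤ κ) :
    (fun q => p + k • (q - p)) '' S ⊆ (fun q => p + κ • (q - p)) '' S := by
  rintro _ ⟨q, hq, rfl⟩
  refine ⟨p + (k / κ) • (q - p), hS.add_smul_sub_mem hp hq
    ⟨div_nonneg hk (hk.trans hκ), div_le_one_of_le₀ hκ (hk.trans hκ)⟩, ?_⟩
  have hmul : κ * (k / κ) = k :=
    mul_div_cancel_of_imp' fun h => le_antisymm (h ▸ hκ) hk
  simp only [add_sub_cancel_left, smul_smul, hmul]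

/-- **`k_l = k_m` when the critical vertices differ in at most one coordinate.**
If two vertices of the box differing in at most one coordinate have images (after
`k`-inflation about `q⁰ ∈ Q`) whose segment contains the origin, then the value set of
the `k`-inflated box contains the origin, and so does the value set of the `κ`-inflated
box for every `κ ≥ k` (for `f` multiaffine). -/
theorem kl_eq_km_of_adjacent_critical_vertices (ℓ : ℕ) (f : (Fin ℓ → ℝ) → ℂ)
    (hf : ∀ (i : Fin ℓ) (q : Fin ℓ → ℝ), ∃ c d : ℂ,
      ∀ t : ℝ, f (Function.update q i t) = t • c + d)
    (a b : Fin ℓ → ℝ) (hab : ∀ i, a i ≤ b i)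
    (q₀ : Fin ℓ → ℝ) (hq₀ : q₀ ∈ Set.Icc a b) (k : ℝ) (hk : 0 ≤ k)
    (u v : Fin ℓ → ℝ)
    (hu : ∀ i, u i = a i ∨ u i = b i) (hv : ∀ i, v i = a i ∨ v i = b i)
    (i₀ : Fin ℓ) (huv : ∀ j, j ≠ i₀ → u j = v j)
    (h0 : (0 : ℂ) ∈ segment ℝ (f (q₀ + k • (u - q₀))) (f (q₀ + k • (v - q₀)))) :
    (0 : ℂ) ∈ f '' ((fun q => q₀ + k • (q - q₀)) '' Set.Icc a b) ∧
      ∀ κ : ℝ, k ≤ κ →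
        (0 : ℂ) ∈ f '' ((fun q => q₀ + κ • (q - q₀)) '' Set.Icc a b) := by
  have hvertex : ∀ w : Fin ℓ → ℝ, (∀ i, w i = a i ∨ w i = b i) → w ∈ Set.Icc a b := by
    refine fun w hw => ⟨fun i => ?_, fun i => ?_⟩ <;> rcases hw i with h | h <;> simp [h, hab i]
  have hzero : (0 : ℂ) ∈ f '' ((fun q => q₀ + k • (q - q₀)) '' Set.Icc a b) := by
    obtain ⟨s, t, hs, ht, hst, hsum⟩ := h0
    refine ⟨_, ⟨s • u + t • v,
      convex_Icc a b (hvertex u hu) (hvertex v hv) hs ht hst, rfl⟩, ?_⟩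
    rw [← hsum, ← map_combo_of_affine_in_coordinate (hf i₀ _)
      (fun j hj => by simp [huv j hj]) hst]
    obtain rfl : t = 1 - s := by linarith
    congr 1
    module
  exact ⟨hzero, fun κ hκ =>
    Set.image_mono ((convex_Icc a b).image_inflation_subset hq₀ hk hκ) hzero⟩
end

section
/- (Maximal-cut: eventually only infinitely-cut coordinates are cut) In the bisection setup satisfying the maximal-cut rule, let I_f := {j : Fin ℓ | the set {r | i r = j} is finite} be the set of coordinates that are cut only finitely many times. Then there exists R such that for all r ≥ R, U r ∩ I_f = ∅. -/
/-- The counting function of a predicate holding infinitely often is unbounded. -/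
theorem tendsto_count_atTop_of_infinite {p : ℕ → Prop} [DecidablePred p]
    (hp : {r | p r}.Infinite) : Filter.Tendsto (Nat.count p) Filter.atTop Filter.atTop :=
  Filter.tendsto_atTop_atTop_of_monotone (Nat.count_monotone p) fun n =>
    ⟨Nat.nth p n, (Nat.count_nth_of_infinite hp n).ge⟩

/-- A predicate holding finitely often has a bounded counting function. -/
theorem count_le_card_of_finite {p : ℕ → Prop} [DecidablePred p]
    (hp : {r | p r}.Finite) (r : ℕ) : Nat.count p r ≤ hp.toFinset.card := by
  rw [Nat.count_eq_card_filter_range]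
  exact Finset.card_le_card fun s hs => by simpa using (Finset.mem_filter.mp hs).2

section Width

variable {ι : Type*} [DecidableEq ι] {w : ℕ → ι → ℝ} {i : ℕ → ι}

/-- If the coordinate `i r` is halved at step `r`, the width of `j` is its initial width divided by
two to the number of cuts. -/
theorem width_eq_div_two_pow_count
    (hw : ∀ r j, w (r + 1) j = if i r = j then w r j / 2 else w r j) (r : ℕ) (j : ι) :
    w r j = w 0 j / 2 ^ Nat.count (fun s => i s = j) r := by
  induction r with
  | zero => simp
  | succ r ih =>
    rw [hw, Nat.count_succ]
    split_ifs
    · rw [ih, pow_succ, div_div]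
    · simpa using ih

theorem tendsto_width_zero_of_infinite
    (hw : ∀ r j, w (r + 1) j = if i r = j then w r j / 2 else w r j) {j : ι}
    (hj : {r | i r = j}.Infinite) :
    Filter.Tendsto (fun r => w r j) Filter.atTop (nhds 0) := by
  rw [funext fun r => width_eq_div_two_pow_count hw r j]
  exact ((tendsto_pow_atTop_atTop_of_one_lt (one_lt_two (α := ℝ))).comp
    (tendsto_count_atTop_of_infinite hj)).const_div_atTop _

theorem exists_pos_le_width_of_finite
    (hw : ∀ r j, w (r + 1) j = if i r = j then w r j / 2 else w r j) {j : ι}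
    (h₀ : 0 < w 0 j) (hj : {r | i r = j}.Finite) : ∃ ε > 0, ∀ r, ε ≤ w r j := by
  refine ⟨w 0 j / 2 ^ hj.toFinset.card, by positivity, fun r => ?_⟩
  rw [width_eq_div_two_pow_count hw r j]
  gcongr
  · exact one_le_two
  · exact count_le_card_of_finite hj r

/-- The width of the coordinate being cut tends to zero. -/
theorem eventually_width_cut_lt [Finite ι]
    (hw : ∀ r j, w (r + 1) j = if i r = j then w r j / 2 else w r j) {ε : ℝ} (hε : 0 < ε) :
    ∀ᶠ r in Filter.atTop, w r (i r) < ε := by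
  have h : ∀ k, ∀ᶠ r in Filter.atTop, i r = k → w r k < ε := fun k => by
    by_cases hk : {r | i r = k}.Finite
    · have hne : ∀ᶠ r in Filter.atTop, r ∉ {r | i r = k} := by
        rw [← Nat.cofinite_eq_atTop]
        exact hk.eventually_cofinite_notMem
      exact hne.mono fun r hr hrk => absurd hrk hr
    · exact ((tendsto_width_zero_of_infinite hw hk).eventually_lt_const hε).mono
        fun r hr _ => hr
  exact (Filter.eventually_all.mpr h).mono fun r hr => hr (i r) rfl

end Width

/-- **Maximal-cut: eventually only infinitely-cut coordinates are cut.**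
In the bisection setup with the maximal-cut rule, the coordinates that are cut only
finitely many times eventually disappear from the index sets `U r`. -/
theorem maximal_cut_eventually_no_finite_coords (ℓ : ℕ) (hℓ : 1 ≤ ℓ)
    (a b : ℕ → Fin ℓ → ℝ) (h₀ : ∀ j, a 0 j < b 0 j)
    (i : ℕ → Fin ℓ) (U : ℕ → Finset (Fin ℓ)) (hUne : ∀ r, (U r).Nonempty)
    (hiU : ∀ r, i r ∈ U r)
    (hfix : ∀ r, ∀ j, j ≠ i r → a (r + 1) j = a r j ∧ b (r + 1) j = b r j)
    (hcut : ∀ r,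
      (a (r + 1) (i r) = (a r (i r) + b r (i r)) / 2 ∧ b (r + 1) (i r) = b r (i r)) ∨
      (a (r + 1) (i r) = a r (i r) ∧ b (r + 1) (i r) = (a r (i r) + b r (i r)) / 2))
    (hmax : ∀ r, b r (i r) - a r (i r) = (U r).sup' (hUne r) (fun j => b r j - a r j)) :
    ∃ R : ℕ, ∀ r ≥ R, (↑(U r) : Set (Fin ℓ)) ∩ {j : Fin ℓ | {r | i r = j}.Finite} = ∅ := by
  have hw : ∀ r j, b (r + 1) j - a (r + 1) j =
      if i r = j then (b r j - a r j) / 2 else b r j - a r j := by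
    intro r j
    split_ifs with hj
    · subst hj
      rcases hcut r with ⟨ha, hb⟩ | ⟨ha, hb⟩ <;> rw [ha, hb] <;> ring
    · obtain ⟨ha, hb⟩ := hfix r j (Ne.symm hj)
      rw [ha, hb]
  have hev : ∀ j, ∀ᶠ r in Filter.atTop, {r | i r = j}.Finite → j ∉ U r := by
    intro j
    by_cases hj : {r | i r = j}.Finite
    · obtain ⟨ε, hε, hle⟩ := exists_pos_le_width_of_finite (w := fun r j => b r j - a r j) hw
        (sub_pos.mpr (h₀ j)) hj
      filter_upwards [eventually_width_cut_lt (w := fun r j => b r j - a r j) hw hε]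
        with r hr _ hjU
      have hle_cut : b r j - a r j ≤ b r (i r) - a r (i r) :=
        hmax r ▸ Finset.le_sup' (fun j => b r j - a r j) hjU
      exact absurd ((hle r).trans hle_cut) hr.not_ge
    · exact Filter.Eventually.of_forall fun r h => absurd h hj
  obtain ⟨R, hR⟩ := Filter.eventually_atTop.mp (Filter.eventually_all.mpr hev)
  exact ⟨R, fun r hr => Set.eq_empty_of_forall_notMem fun j hj => hR r hr j hj.2 hj.1⟩
end

section
/- (Maximal-cut convergence) In the bisection setup satisfying the maximal-cut rule, the largest side length among the coordinates in U r tends to zero: the sequence r ↦ max over j ∈ U r of (b r j − a r j) tends to 0 as r → ∞. -/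
/-- If at each step one coordinate of a nonnegative finite family is halved and the others are
kept, then the halved coordinate tends to zero. -/
theorem tendsto_halved_coordinate {ι : Type*} [Fintype ι] (w : ℕ → ι → ℝ) (i : ℕ → ι)
    (h₀ : ∀ j, 0 ≤ w 0 j) (hfix : ∀ r j, j ≠ i r → w (r + 1) j = w r j)
    (hhalf : ∀ r, w (r + 1) (i r) = w r (i r) / 2) :
    Filter.Tendsto (fun r => w r (i r)) Filter.atTop (nhds 0) := by
  classical
  have hnonneg : ∀ r j, 0 ≤ w r j := by
    intro r
    induction r with
    | zero => exact h₀
    | succ r ih =>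
      intro j
      by_cases hj : j = i r
      · rw [hj, hhalf]
        exact div_nonneg (ih _) zero_le_two
      · rw [hfix r j hj]
        exact ih j
  have hsum : ∀ r, ∑ j, w r j - ∑ j, w (r + 1) j = w r (i r) / 2 := by
    intro r
    rw [← Finset.sum_sub_distrib, Finset.sum_eq_single (i r)]
    · rw [hhalf]
      ring
    · intro j _ hj
      rw [hfix r j hj, sub_self]
    · simp
  have hanti : Antitone fun r => ∑ j, w r j :=
    antitone_nat_of_succ_le fun r => by linarith [hsum r, hnonneg r (i r)]
  have hbdd : BddBelow (Set.range fun r => ∑ j, w r j) :=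
    ⟨0, by rintro _ ⟨r, rfl⟩; exact Finset.sum_nonneg fun j _ => hnonneg r j⟩
  have hlim := tendsto_atTop_ciInf hanti hbdd
  have hdiff := (hlim.sub (hlim.comp (Filter.tendsto_add_atTop_nat 1))).const_mul 2
  rw [sub_self, mul_zero] at hdiff
  refine hdiff.congr fun r => ?_
  simp only [Function.comp_apply, hsum]
  ring

/-- **Maximal-cut convergence.** In the bisection setup with the maximal-cut rule, the
largest side length among the coordinates in `U r` tends to zero. -/
theorem maximal_cut_convergence (ℓ : ℕ) (hℓ : 1 ≤ ℓ)
    (a b : ℕ → Fin ℓ → ℝ) (h₀ : ∀ j, a 0 j < b 0 j)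
    (i : ℕ → Fin ℓ) (U : ℕ → Finset (Fin ℓ)) (hUne : ∀ r, (U r).Nonempty)
    (hiU : ∀ r, i r ∈ U r)
    (hfix : ∀ r, ∀ j, j ≠ i r → a (r + 1) j = a r j ∧ b (r + 1) j = b r j)
    (hcut : ∀ r,
      (a (r + 1) (i r) = (a r (i r) + b r (i r)) / 2 ∧ b (r + 1) (i r) = b r (i r)) ∨
      (a (r + 1) (i r) = a r (i r) ∧ b (r + 1) (i r) = (a r (i r) + b r (i r)) / 2))
    (hmax : ∀ r, b r (i r) - a r (i r) = (U r).sup' (hUne r) (fun j => b r j - a r j)) :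
    Filter.Tendsto (fun r => (U r).sup' (hUne r) (fun j => b r j - a r j))
      Filter.atTop (nhds 0) := by
  simp only [← hmax]
  refine tendsto_halved_coordinate (fun r j => b r j - a r j) i
    (fun j => (sub_pos.2 (h₀ j)).le) (fun r j hj => ?_) (fun r => ?_)
  · obtain ⟨ha, hb⟩ := hfix r j hj
    simp only [ha, hb]
  · rcases hcut r with ⟨ha, hb⟩ | ⟨ha, hb⟩ <;> simp only [ha, hb] <;> ring
end

section
/- (Fair-cut: eventually only infinitely-cut coordinates are cut) In the bisection setup satisfying the fair-cut rule, let I_f := {j : Fin ℓ | the set {r | i r = j} is finite} be the set of coordinates that are cut only finitely many times. Then there exists R such that for all r ≥ R, U r ∩ I_f = ∅. -/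
/-- The ratio of the initial to the current side length is `2` to the number of cuts so far. -/
lemma bisection_ratio_eq_two_pow_count {ι : Type*} [DecidableEq ι] {a b : ℕ → ι → ℝ}
    (h₀ : ∀ j, a 0 j < b 0 j) {i : ℕ → ι}
    (hfix : ∀ r, ∀ j, j ≠ i r → a (r + 1) j = a r j ∧ b (r + 1) j = b r j)
    (hcut : ∀ r,
      (a (r + 1) (i r) = (a r (i r) + b r (i r)) / 2 ∧ b (r + 1) (i r) = b r (i r)) ∨
      (a (r + 1) (i r) = a r (i r) ∧ b (r + 1) (i r) = (a r (i r) + b r (i r)) / 2))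
    (r : ℕ) (j : ι) :
    (b 0 j - a 0 j) / (b r j - a r j) = 2 ^ Nat.count (fun s => i s = j) r := by
  have hlen : b 0 j - a 0 j = 2 ^ Nat.count (fun s => i s = j) r * (b r j - a r j) := by
    induction r with
    | zero => simp
    | succ r ih =>
      rw [ih, Nat.count_succ]
      split_ifs with h
      · subst h
        rcases hcut r with ⟨ha, hb⟩ | ⟨ha, hb⟩ <;> rw [ha, hb] <;> ring
      · obtain ⟨ha, hb⟩ := hfix r j (Ne.symm h)
        rw [ha, hb, add_zero]
  have hne : b r j - a r j ≠ 0 := by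
    intro h
    rw [h, mul_zero] at hlen
    exact (sub_pos.mpr (h₀ j)).ne' hlen
  rw [hlen, mul_div_cancel_right₀ _ hne]

/-- Only finitely many indices have their value occurring at most `M` times before them. -/
lemma finite_setOf_count_self_le {ι : Type*} [DecidableEq ι] [Finite ι] (i : ℕ → ι) (M : ℕ) :
    {r | Nat.count (fun s => i s = i r) r ≤ M}.Finite := by
  refine Set.Finite.of_finite_image (f := fun r => (i r, Nat.count (fun s => i s = i r) r))
    ((Set.finite_univ.prod (Set.finite_Iic M)).subset ?_) ?_
  · rintro _ ⟨r, hr, rfl⟩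
    exact ⟨Set.mem_univ _, hr⟩
  · intro r _ s _ h
    obtain ⟨hi, hc⟩ := Prod.mk.inj h
    rw [hi] at hc
    exact Nat.count_injective (p := fun t => i t = i s) hi rfl hc

/-- **Fair-cut: eventually only infinitely-cut coordinates are cut.**
In the bisection setup with the fair-cut rule, the coordinates that are cut only
finitely many times eventually disappear from the index sets `U r`. -/
theorem fair_cut_eventually_no_finite_coords (ℓ : ℕ) (hℓ : 1 ≤ ℓ)
    (a b : ℕ → Fin ℓ → ℝ) (h₀ : ∀ j, a 0 j < b 0 j)
    (i : ℕ → Fin ℓ) (U : ℕ → Finset (Fin ℓ)) (hUne : ∀ r, (U r).Nonempty)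
    (hiU : ∀ r, i r ∈ U r)
    (hfix : ∀ r, ∀ j, j ≠ i r → a (r + 1) j = a r j ∧ b (r + 1) j = b r j)
    (hcut : ∀ r,
      (a (r + 1) (i r) = (a r (i r) + b r (i r)) / 2 ∧ b (r + 1) (i r) = b r (i r)) ∨
      (a (r + 1) (i r) = a r (i r) ∧ b (r + 1) (i r) = (a r (i r) + b r (i r)) / 2))
    (hfair : ∀ r, (b 0 (i r) - a 0 (i r)) / (b r (i r) - a r (i r)) =
      (U r).inf' (hUne r) (fun j => (b 0 j - a 0 j) / (b r j - a r j))) :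
    ∃ R : ℕ, ∀ r ≥ R, (↑(U r) : Set (Fin ℓ)) ∩ {j : Fin ℓ | {r | i r = j}.Finite} = ∅ := by
  have hfin (j : Fin ℓ) (hj : {r | i r = j}.Finite) : {r | j ∈ U r}.Finite := by
    refine (finite_setOf_count_self_le i hj.toFinset.card).subset fun r hr => ?_
    have hle := (hfair r).trans_le (Finset.inf'_le _ hr)
    simp only [bisection_ratio_eq_two_pow_count h₀ hfix hcut] at hle
    refine ((pow_le_pow_iff_right₀ one_lt_two).mp hle).trans ?_
    rw [Nat.count_eq_card_filter_range]
    exact Finset.card_le_card fun s hs => by simpa using (Finset.mem_filter.mp hs).2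
  obtain ⟨R, hR⟩ := ((Set.toFinite {j : Fin ℓ | {r | i r = j}.Finite}).biUnion hfin).bddAbove
  refine ⟨R + 1, fun r hr => Set.eq_empty_of_forall_notMem fun j ⟨hjU, hj⟩ => ?_⟩
  exact absurd (hR (Set.mem_biUnion hj hjU)) (by lia)
end

section
/- (Fair-cut convergence) In the bisection setup satisfying the fair-cut rule, the largest side length among the coordinates in U r tends to zero: the sequence r ↦ max over j ∈ U r of (b r j − a r j) tends to 0 as r → ∞. -/
/-- The number of earlier visits to the state occupied at time `r` tends to infinity when there are
finitely many states. -/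
theorem tendsto_count_self_atTop {α : Type*} [Finite α] [DecidableEq α] (i : ℕ → α) :
    Filter.Tendsto (fun r => Nat.count (fun s => i s = i r) r) Filter.atTop Filter.atTop := by
  have hinj : Function.Injective (fun r => (i r, Nat.count (fun s => i s = i r) r)) := by
    intro r s h
    simp only [Prod.mk.injEq] at h
    obtain ⟨h₁, h₂⟩ := h
    rw [h₁] at h₂
    exact Nat.count_injective (p := fun t => i t = i s) h₁ rfl h₂
  refine Filter.tendsto_atTop.2 fun K => ?_
  rw [← Nat.cofinite_eq_atTop, Filter.eventually_cofinite]
  refine ((Set.finite_univ.prod (Set.finite_lt_nat K)).preimage hinj.injOn).subset ?_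
  intro r hr
  simpa using hr

/-- If the entry indexed by `i r` is halved at step `r` and all others are kept, then each entry is
its initial value divided by two to the number of times it was selected. -/
theorem eq_div_two_pow_count {α : Type*} [DecidableEq α] {w : ℕ → α → ℝ} {i : ℕ → α}
    (hfix : ∀ r j, j ≠ i r → w (r + 1) j = w r j)
    (hcut : ∀ r, w (r + 1) (i r) = w r (i r) / 2) (r : ℕ) (j : α) :
    w r j = w 0 j / 2 ^ Nat.count (fun s => i s = j) r := by
  induction r with
  | zero => simp
  | succ r ih =>
    rw [Nat.count_succ]
    split_ifs with h
    · subst h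
      rw [hcut, ih, pow_succ, div_div]
    · rw [hfix r j (Ne.symm h), ih, add_zero]

/-- **Fair-cut convergence.** In the bisection setup with the fair-cut rule, the
largest side length among the coordinates in `U r` tends to zero. -/
theorem fair_cut_convergence (ℓ : ℕ) (hℓ : 1 ≤ ℓ)
    (a b : ℕ → Fin ℓ → ℝ) (h₀ : ∀ j, a 0 j < b 0 j)
    (i : ℕ → Fin ℓ) (U : ℕ → Finset (Fin ℓ)) (hUne : ∀ r, (U r).Nonempty)
    (hiU : ∀ r, i r ∈ U r)
    (hfix : ∀ r, ∀ j, j ≠ i r → a (r + 1) j = a r j ∧ b (r + 1) j = b r j)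
    (hcut : ∀ r,
      (a (r + 1) (i r) = (a r (i r) + b r (i r)) / 2 ∧ b (r + 1) (i r) = b r (i r)) ∨
      (a (r + 1) (i r) = a r (i r) ∧ b (r + 1) (i r) = (a r (i r) + b r (i r)) / 2))
    (hfair : ∀ r, (b 0 (i r) - a 0 (i r)) / (b r (i r) - a r (i r)) =
      (U r).inf' (hUne r) (fun j => (b 0 j - a 0 j) / (b r j - a r j))) :
    Filter.Tendsto (fun r => (U r).sup' (hUne r) (fun j => b r j - a r j))
      Filter.atTop (nhds 0) := by
  have hw : ∀ r j, b r j - a r j = (b 0 j - a 0 j) / 2 ^ Nat.count (fun s => i s = j) r := by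
    refine eq_div_two_pow_count (w := fun r j => b r j - a r j) (fun r j hj => ?_) fun r => ?_
    · simp only [(hfix r j hj).1, (hfix r j hj).2]
    · rcases hcut r with ⟨ha, hb⟩ | ⟨ha, hb⟩ <;> simp only [ha, hb] <;> ring
  have hpos : ∀ j, 0 < b 0 j - a 0 j := fun j => sub_pos.2 (h₀ j)
  have hratio : ∀ r j, (b 0 j - a 0 j) / (b r j - a r j) =
      2 ^ Nat.count (fun s => i s = j) r := fun r j => by
    rw [hw r j, div_div_cancel₀ (hpos j).ne']
  have hmin : ∀ r, ∀ j ∈ U r, (2 : ℝ) ^ Nat.count (fun s => i s = i r) r ≤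
      2 ^ Nat.count (fun s => i s = j) r := fun r j hj => by
    rw [← hratio, ← hratio, hfair]
    exact Finset.inf'_le _ hj
  have hlim : Filter.Tendsto (fun r => (∑ j, (b 0 j - a 0 j)) /
      (2 : ℝ) ^ Nat.count (fun s => i s = i r) r) Filter.atTop (nhds 0) :=
    Filter.Tendsto.const_div_atTop ((tendsto_pow_atTop_atTop_of_one_lt one_lt_two).comp
      (tendsto_count_self_atTop i)) _
  refine squeeze_zero (fun r => ?_) (fun r => ?_) hlim
  · refine le_trans ?_ (Finset.le_sup' (fun j => b r j - a r j) (hiU r))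
    simp only [hw r]
    exact div_nonneg (hpos _).le (by positivity)
  · refine Finset.sup'_le _ _ fun j hj => ?_
    rw [hw r j]
    exact div_le_div₀ (Finset.sum_nonneg fun k _ => (hpos k).le)
      (Finset.single_le_sum (f := fun k => b 0 k - a 0 k) (fun k _ => (hpos k).le)
        (Finset.mem_univ j)) (by positivity) (hmin r j hj)
end

section
/- (Theorem 5, maximal-cut) In the bisection setup satisfying the maximal-cut rule, suppose α, β : ℕ → (Fin ℓ → ℝ) satisfy, for every r: α r ∈ Set.Icc (a r) (b r), β r ∈ Set.Icc (a r) (b r), and α r j = β r j for every j ∉ U r. Then the Euclidean distance between α r and β r tends to 0 as r → ∞, i.e., (Σ_j (α r j − β r j)²)^{1/2} → 0; moreover, for every f : (Fin ℓ → ℝ) → ℂ that is continuous on Set.Icc (a 0) (b 0), f (α r) − f (β r) → 0 as r → ∞. -/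
/-- If a finite family of nonnegative sequences evolves by halving, at each step, one selected
entry and leaving the others unchanged, then the selected entries tend to `0`. -/
lemma tendsto_selected_of_halving {ι : Type*} [Fintype ι] {w : ℕ → ι → ℝ} {i : ℕ → ι}
    (hnonneg : ∀ r j, 0 ≤ w r j) (hfix : ∀ r j, j ≠ i r → w (r + 1) j = w r j)
    (hhalf : ∀ r, w (r + 1) (i r) = w r (i r) / 2) :
    Filter.Tendsto (fun r => w r (i r)) Filter.atTop (nhds 0) := by
  classical
  have hdiff : ∀ r, ∑ j, w r j - ∑ j, w (r + 1) j = w r (i r) / 2 := by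
    intro r
    rw [← Finset.sum_sub_distrib, Finset.sum_eq_single (i r)]
    · rw [hhalf]; ring
    · intro j _ hj
      rw [hfix r j hj, sub_self]
    · simp
  have hanti : Antitone fun r => ∑ j, w r j :=
    antitone_nat_of_succ_le fun r => by linarith [hdiff r, hnonneg r (i r)]
  have hbdd : BddBelow (Set.range fun r => ∑ j, w r j) :=
    ⟨0, by rintro _ ⟨r, rfl⟩; exact Finset.sum_nonneg fun j _ => hnonneg r j⟩
  have hlim := tendsto_atTop_ciInf hanti hbdd
  have h := (hlim.sub (hlim.comp (Filter.tendsto_add_atTop_nat 1))).const_mul 2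
  rw [sub_self, mul_zero] at h
  refine h.congr fun r => ?_
  simp only [Function.comp_apply]
  rw [hdiff r]
  ring

/-- A function continuous on a compact set has asymptotically equal values along two sequences in
that set whose distance tends to `0`. -/
lemma ContinuousOn.tendsto_sub_of_tendsto_dist {X E : Type*} [PseudoMetricSpace X]
    [SeminormedAddCommGroup E] {K : Set X} (hK : IsCompact K) {f : X → E} (hf : ContinuousOn f K)
    {x y : ℕ → X} (hx : ∀ r, x r ∈ K) (hy : ∀ r, y r ∈ K)
    (hxy : Filter.Tendsto (fun r => dist (x r) (y r)) Filter.atTop (nhds 0)) :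
    Filter.Tendsto (fun r => f (x r) - f (y r)) Filter.atTop (nhds 0) := by
  have hu := Metric.uniformContinuousOn_iff.mp (hK.uniformContinuousOn_of_continuous hf)
  rw [Metric.tendsto_nhds]
  intro ε hε
  obtain ⟨δ, hδ, h⟩ := hu ε hε
  filter_upwards [hxy.eventually_lt_const hδ] with r hr
  simpa [dist_eq_norm] using h _ (hx r) _ (hy r) hr

/-- **Theorem 5, maximal-cut.** In the bisection setup with the maximal-cut rule, if
`α r, β r` lie in the `r`-th box and agree outside `U r`, then their Euclidean distance
tends to `0`, and `f (α r) - f (β r) → 0` for any `f` continuous on the initial box. -/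
theorem theorem5_maximal_cut (ℓ : ℕ) (hℓ : 1 ≤ ℓ)
    (a b : ℕ → Fin ℓ → ℝ) (h₀ : ∀ j, a 0 j < b 0 j)
    (i : ℕ → Fin ℓ) (U : ℕ → Finset (Fin ℓ)) (hUne : ∀ r, (U r).Nonempty)
    (hiU : ∀ r, i r ∈ U r)
    (hfix : ∀ r, ∀ j, j ≠ i r → a (r + 1) j = a r j ∧ b (r + 1) j = b r j)
    (hcut : ∀ r,
      (a (r + 1) (i r) = (a r (i r) + b r (i r)) / 2 ∧ b (r + 1) (i r) = b r (i r)) ∨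
      (a (r + 1) (i r) = a r (i r) ∧ b (r + 1) (i r) = (a r (i r) + b r (i r)) / 2))
    (hmax : ∀ r, b r (i r) - a r (i r) = (U r).sup' (hUne r) (fun j => b r j - a r j))
    (α β : ℕ → Fin ℓ → ℝ)
    (hα : ∀ r, α r ∈ Set.Icc (a r) (b r)) (hβ : ∀ r, β r ∈ Set.Icc (a r) (b r))
    (hagree : ∀ r, ∀ j, j ∉ U r → α r j = β r j) :
    Filter.Tendsto (fun r => Real.sqrt (∑ j : Fin ℓ, (α r j - β r j) ^ 2))
        Filter.atTop (nhds 0) ∧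
      ∀ f : (Fin ℓ → ℝ) → ℂ, ContinuousOn f (Set.Icc (a 0) (b 0)) →
        Filter.Tendsto (fun r => f (α r) - f (β r)) Filter.atTop (nhds 0) := by
  have hle : ∀ r j, a r j ≤ b r j := fun r j => ((hα r).1 j).trans ((hα r).2 j)
  have hwidth : Filter.Tendsto (fun r => b r (i r) - a r (i r)) Filter.atTop (nhds 0) := by
    refine tendsto_selected_of_halving (w := fun r j => b r j - a r j)
      (fun r j => sub_nonneg.mpr (hle r j)) (fun r j hj => ?_) (fun r => ?_)
    · simp only [hfix r j hj]
    · rcases hcut r with ⟨h₁, h₂⟩ | ⟨h₁, h₂⟩ <;> simp only [h₁, h₂] <;> ring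
  have hstep : ∀ r, a r ≤ a (r + 1) ∧ b (r + 1) ≤ b r := by
    refine fun r => ⟨fun j => ?_, fun j => ?_⟩ <;> by_cases hj : j = i r
    · subst hj
      rcases hcut r with h | h <;> linarith [hle r (i r), h.1]
    · exact (hfix r j hj).1.ge
    · subst hj
      rcases hcut r with h | h <;> linarith [hle r (i r), h.2]
    · exact (hfix r j hj).2.le
  have hsub : ∀ r, Set.Icc (a r) (b r) ⊆ Set.Icc (a 0) (b 0) := fun r =>
    Set.Icc_subset_Icc (monotone_nat_of_le_succ (fun n => (hstep n).1) r.zero_le)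
      (antitone_nat_of_succ_le (fun n => (hstep n).2) r.zero_le)
  have hbound : ∀ r j, |α r j - β r j| ≤ b r (i r) - a r (i r) := by
    intro r j
    by_cases hj : j ∈ U r
    · have hj_le : b r j - a r j ≤ b r (i r) - a r (i r) := by
        rw [hmax r]
        exact Finset.le_sup' (fun j => b r j - a r j) hj
      rw [abs_le]
      constructor <;> linarith [(hα r).1 j, (hα r).2 j, (hβ r).1 j, (hβ r).2 j]
    · rw [hagree r j hj, sub_self, abs_zero]
      exact sub_nonneg.mpr (hle r (i r))
  have hcoord : ∀ j, Filter.Tendsto (fun r => α r j - β r j) Filter.atTop (nhds 0) := fun j =>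
    squeeze_zero_norm (fun r => hbound r j) hwidth
  refine ⟨?_, fun f hf => ?_⟩
  · have h := (tendsto_finsetSum Finset.univ fun j _ => (hcoord j).pow 2).sqrt
    simpa using h
  · refine hf.tendsto_sub_of_tendsto_dist isCompact_Icc (fun r => hsub r (hα r))
      (fun r => hsub r (hβ r)) (squeeze_zero (fun r => dist_nonneg) (fun r => ?_) hwidth)
    exact (dist_pi_le_iff (sub_nonneg.mpr (hle r (i r)))).mpr fun j => hbound r j
end

section
/- (Zero Exclusion Condition) Let 𝒬 ⊆ (Fin ℓ → ℝ) be nonempty and connected, let D ⊆ ℂ be open, and let P : (Fin ℓ → ℝ) → Polynomial ℂ be a polynomial family with continuous coefficients and invariant degree n on 𝒬. Then every root of P q lies in D for every q ∈ 𝒬 if and only if both: (i) there exists q ∈ 𝒬 such that every root of P q lies in D, and (ii) (P q).eval z ≠ 0 for every q ∈ 𝒬 and every z in the frontier of D. -/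
open Polynomial Topology

section PolynomialFamily

variable {X : Type*} [TopologicalSpace X] {P : X → ℂ[X]} {n : ℕ}

lemma continuous_eval_of_continuous_coeff (hcoef : ∀ j, Continuous fun x => (P x).coeff j)
    (hdeg : ∀ x, (P x).degree = n) : Continuous fun w : X × ℂ => (P w.1).eval w.2 := by
  have h (w : X × ℂ) :
      (P w.1).eval w.2 = ∑ j ∈ Finset.range (n + 1), (P w.1).coeff j * w.2 ^ j := by
    rw [eval_eq_sum_range, natDegree_eq_of_degree_eq_some (hdeg w.1)]
  simp only [h]
  exact continuous_finsetSum _ fun j _ =>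
    ((hcoef j).comp continuous_fst).mul (continuous_snd.pow j)

lemma continuous_cauchyBound (hcoef : ∀ j, Continuous fun x => (P x).coeff j)
    (hdeg : ∀ x, (P x).degree = n) : Continuous fun x => (P x).cauchyBound := by
  simp only [cauchyBound, leadingCoeff, fun x => natDegree_eq_of_degree_eq_some (hdeg x)]
  exact ((Continuous.finset_sup_apply fun j _ => (hcoef j).nnnorm).div₀ (hcoef n).nnnorm
    fun x => nnnorm_ne_zero_iff.2 (coeff_ne_zero_of_eq_degree (hdeg x))).add continuous_const

/-- Roots cannot suddenly enter a closed set. -/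
lemma isOpen_setOf_roots_subset (hcoef : ∀ j, Continuous fun x => (P x).coeff j)
    (hdeg : ∀ x, (P x).degree = n) {D : Set ℂ} (hD : IsOpen D) :
    IsOpen {x | ∀ z, (P x).eval z = 0 → z ∈ D} := by
  refine isOpen_iff_mem_nhds.2 fun x₀ hx₀ => ?_
  have hK : IsCompact (Metric.closedBall (0 : ℂ) ((P x₀).cauchyBound + 1) ∩ Dᶜ) :=
    (isCompact_closedBall _ _).inter_right hD.isClosed_compl
  have hbound : ∀ᶠ x in 𝓝 x₀, (P x).cauchyBound < (P x₀).cauchyBound + 1 :=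
    (continuous_cauchyBound hcoef hdeg).continuousAt.eventually_lt_const
      (lt_add_of_pos_right _ one_pos)
  have hne := hK.eventually_forall_of_forall_eventually (x₀ := x₀)
    (P := fun x z => (P x).eval z ≠ 0) fun z hz =>
      (continuous_eval_of_continuous_coeff hcoef hdeg).continuousAt.eventually_ne
        fun h => hz.2 (hx₀ z h)
  filter_upwards [hbound, hne] with x hx hxK z hz
  by_contra hzD
  have hP : P x ≠ 0 := fun h => by simpa [h] using hdeg x
  have hzx : ‖z‖₊ < (P x₀).cauchyBound + 1 := (IsRoot.norm_lt_cauchyBound hP hz).trans hx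
  exact hxK z ⟨mem_closedBall_zero_iff.2 (by exact_mod_cast hzx.le), hzD⟩ hz

lemma norm_coeff_mul_pow_le_norm_eval {p : ℂ[X]} (hp : p.degree = n) {z : ℂ} {ε : ℝ} (hε : 0 ≤ ε)
    (h : ∀ w, p.eval w = 0 → ε ≤ ‖z - w‖) : ‖p.coeff n‖ * ε ^ n ≤ ‖p.eval z‖ := by
  have hs := IsAlgClosed.splits p
  have hn := natDegree_eq_of_degree_eq_some hp
  have hp0 : p ≠ 0 := fun h => by simp [h] at hp
  have aux (s : Multiset ℂ) (hs : ∀ w ∈ s, ε ≤ ‖z - w‖) :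
      ε ^ s.card ≤ ‖(s.map (z - ·)).prod‖ := by
    induction s using Multiset.induction_on with
    | empty => simp
    | cons a s ih =>
      rw [Multiset.card_cons, pow_succ', Multiset.map_cons, Multiset.prod_cons, norm_mul]
      have := ih fun w hw => hs w (Multiset.mem_cons_of_mem hw)
      have := hs a (Multiset.mem_cons_self a s)
      gcongr
  have key := aux p.roots fun w hw => h w ((mem_roots hp0).1 hw)
  rw [← hs.natDegree_eq_card_roots, hn] at key
  rw [hs.eval_eq_prod_roots, norm_mul, leadingCoeff, hn]
  gcongr

/-- Roots cannot suddenly leave an open set. -/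
lemma isOpen_setOf_exists_root_mem (hcoef : ∀ j, Continuous fun x => (P x).coeff j)
    (hdeg : ∀ x, (P x).degree = n) {U : Set ℂ} (hU : IsOpen U) :
    IsOpen {x | ∃ z ∈ U, (P x).eval z = 0} := by
  refine isOpen_iff_mem_nhds.2 fun x₀ ⟨z, hzU, hz⟩ => ?_
  obtain ⟨ε, hε, hball⟩ := Metric.isOpen_iff.1 hU z hzU
  have hlt : ∀ᶠ x in 𝓝 x₀, ‖(P x).eval z‖ < ‖(P x).coeff n‖ * ε ^ n := by
    have heval : Continuous fun x => (P x).eval z :=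
      (continuous_eval_of_continuous_coeff hcoef hdeg).comp (.prodMk_left z)
    refine heval.norm.continuousAt.eventually_lt
      ((hcoef n).norm.mul continuous_const).continuousAt ?_
    have := norm_pos_iff.2 (coeff_ne_zero_of_eq_degree (hdeg x₀))
    rw [hz, norm_zero]
    positivity
  filter_upwards [hlt] with x hx
  by_contra! hroots
  refine hx.not_ge (norm_coeff_mul_pow_le_norm_eval (hdeg x) hε.le fun w hw => ?_)
  by_contra! hwz
  exact hroots w (hball (by rwa [Metric.mem_ball, dist_comm, dist_eq_norm])) hw

end PolynomialFamily

/-- **Zero Exclusion Condition.** For a polynomial family `P` with continuous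
coefficients and invariant degree `n` on a nonempty connected set `𝒬`, and an open
region `D ⊆ ℂ`, all roots of `P q` lie in `D` for every `q ∈ 𝒬` if and only if this
holds for some `q ∈ 𝒬` and `P q` has no zero on the frontier of `D` for every `q ∈ 𝒬`. -/
theorem zero_exclusion_condition (ℓ : ℕ) (𝒬 : Set (Fin ℓ → ℝ))
    (hne : 𝒬.Nonempty) (hconn : IsPreconnected 𝒬)
    (D : Set ℂ) (hD : IsOpen D)
    (P : (Fin ℓ → ℝ) → Polynomial ℂ) (n : ℕ)
    (hcoef : ∀ j : ℕ, ContinuousOn (fun q => (P q).coeff j) 𝒬)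
    (hdeg : ∀ q ∈ 𝒬, (P q).degree = (n : WithBot ℕ)) :
    (∀ q ∈ 𝒬, ∀ z : ℂ, (P q).eval z = 0 → z ∈ D) ↔
      ((∃ q ∈ 𝒬, ∀ z : ℂ, (P q).eval z = 0 → z ∈ D) ∧
        ∀ q ∈ 𝒬, ∀ z ∈ frontier D, (P q).eval z ≠ 0) := by
  constructor
  · intro h
    obtain ⟨q, hq⟩ := hne
    refine ⟨⟨q, hq, h q hq⟩, fun q hq z hz hzero => ?_⟩
    rw [hD.frontier_eq] at hz
    exact hz.2 (h q hq z hzero)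
  · rintro ⟨⟨q₀, hq₀, hroots⟩, hfr⟩
    have : PreconnectedSpace 𝒬 := Subtype.preconnectedSpace hconn
    have hcoef' (j : ℕ) : Continuous fun q : 𝒬 => (P q).coeff j := (hcoef j).domRestrict
    have hdeg' (q : 𝒬) : (P q).degree = n := hdeg q q.2
    have hcompl : {q : 𝒬 | ∀ z, (P q).eval z = 0 → z ∈ D}ᶜ =
        {q : 𝒬 | ∃ z ∈ (closure D)ᶜ, (P q).eval z = 0} := by
      ext q
      simp only [Set.mem_compl_iff, Set.mem_ofPred_eq, not_forall]
      constructor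
      · rintro ⟨z, hz, hzD⟩
        refine ⟨z, fun hzc => hfr q q.2 z ?_ hz, hz⟩
        rw [hD.frontier_eq]
        exact ⟨hzc, hzD⟩
      · rintro ⟨z, hzc, hz⟩
        exact ⟨z, hz, fun hzD => hzc (subset_closure hzD)⟩
    have hclopen : IsClopen {q : 𝒬 | ∀ z, (P q).eval z = 0 → z ∈ D} := by
      refine ⟨⟨?_⟩, isOpen_setOf_roots_subset hcoef' hdeg' hD⟩
      rw [hcompl]
      exact isOpen_setOf_exists_root_mem hcoef' hdeg' isClosed_closure.isOpen_compl
    have huniv := hclopen.eq_univ ⟨⟨q₀, hq₀⟩, hroots⟩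
    exact fun q hq => Set.eq_univ_iff_forall.1 huniv ⟨q, hq⟩
end

section
/- (Invariance of the root count) Let 𝒬 ⊆ (Fin ℓ → ℝ) be connected, let D ⊆ ℂ be open, and let P : (Fin ℓ → ℝ) → Polynomial ℂ be a polynomial family with continuous coefficients and invariant degree n on 𝒬. Assume (P q).eval z ≠ 0 for every q ∈ 𝒬 and every z in the frontier of D. Then the number of roots of P q lying in D, counted with multiplicity (i.e., Multiset.countP (· ∈ D) applied to (P q).roots), is the same for all q ∈ 𝒬. -/
open scoped Classical

open Filter Topology Polynomial

/-- A multiset of cardinality `n` is enumerated by a function on `Fin n`. -/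
lemma Multiset.exists_map_univ_fin_eq {α : Type*} {n : ℕ} (m : Multiset α)
    (hm : Multiset.card m = n) :
    ∃ r : Fin n → α, (Finset.univ : Finset (Fin n)).val.map r = m := by
  subst hm
  obtain ⟨l, rfl⟩ : ∃ l : List α, (l : Multiset α) = m := ⟨m.toList, m.coe_toList⟩
  exact ⟨l.get, (Fin.univ_val_map l.get).trans (congrArg _ (List.ofFn_get l))⟩

/-- If the coefficients converge and the degree is constant, then the Cauchy bounds are
eventually bounded. -/
lemma Polynomial.exists_eventually_cauchyBound_le {ι : Type*} {F : Filter ι} {n : ℕ}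
    {P : ι → ℂ[X]} {p : ℂ[X]} (hP : ∀ᶠ q in F, (P q).natDegree = n) (hp : p.natDegree = n)
    (hp0 : p ≠ 0) (hcoef : ∀ j, Tendsto (fun q => (P q).coeff j) F (𝓝 (p.coeff j))) :
    ∃ B : ℝ, ∀ᶠ q in F, ((P q).cauchyBound : ℝ) ≤ B := by
  have hlead : p.coeff n ≠ 0 := by
    rw [← hp]
    exact leadingCoeff_ne_zero.mpr hp0
  have hsum : Tendsto (fun q => ((Finset.range n).sup fun i => ‖(P q).coeff i‖₊) /
      ‖(P q).coeff n‖₊ + 1) F (𝓝 (((Finset.range n).sup fun i => ‖p.coeff i‖₊) /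
      ‖p.coeff n‖₊ + 1)) := by
    refine Tendsto.add_const _ (Tendsto.div ?_ (hcoef n).nnnorm (by simpa using hlead))
    exact Tendsto.finset_sup_nhds_apply fun i _ => (hcoef i).nnnorm
  refine ⟨(((Finset.range n).sup fun i => ‖p.coeff i‖₊) / ‖p.coeff n‖₊ + 1 + 1 : NNReal), ?_⟩
  filter_upwards [hP, hsum.eventually_lt_const (lt_add_one _)] with q hq hlt
  rw [NNReal.coe_le_coe, cauchyBound, leadingCoeff, hq]
  exact hlt.le

/-- Along an ultrafilter, enumerations of the roots of polynomials of constant degree with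
convergent coefficients converge to an enumeration of the roots of the limit. -/
lemma Polynomial.exists_tendsto_roots {ι : Type*} {U : Ultrafilter ι} {n : ℕ}
    {P : ι → ℂ[X]} {p : ℂ[X]} (hP : ∀ᶠ q in U, (P q).natDegree = n) (hp : p.natDegree = n)
    (hp0 : p ≠ 0) (hcoef : ∀ j, Tendsto (fun q => (P q).coeff j) U (𝓝 (p.coeff j)))
    {r : ι → Fin n → ℂ}
    (hr : ∀ᶠ q in U, (Finset.univ : Finset (Fin n)).val.map (r q) = (P q).roots) :
    ∃ s : Fin n → ℂ, Tendsto r U (𝓝 s) ∧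
      (Finset.univ : Finset (Fin n)).val.map s = p.roots := by
  obtain ⟨B, hB⟩ := exists_eventually_cauchyBound_le hP hp hp0 hcoef
  have hbdd : ∀ᶠ q in U, r q ∈ Set.univ.pi fun _ : Fin n => Metric.closedBall (0 : ℂ) B := by
    filter_upwards [hB, hr] with q hqB hqr i _
    have hmem : r q i ∈ (P q).roots := by
      rw [← hqr]
      exact Multiset.mem_map_of_mem _ (Finset.mem_univ i)
    rw [mem_closedBall_zero_iff]
    exact le_trans (NNReal.coe_le_coe.mpr ((isRoot_of_mem_roots hmem).norm_lt_cauchyBound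
      (ne_zero_of_mem_roots hmem)).le) hqB
  obtain ⟨s, -, hs⟩ := (isCompact_univ_pi fun _ : Fin n =>
    isCompact_closedBall (0 : ℂ) B).ultrafilter_le_nhds (U.map r) (le_principal_iff.mpr hbdd)
  have hs' : Tendsto r U (𝓝 s) := hs
  refine ⟨s, hs', ?_⟩
  have hfactor : p = C (p.coeff n) * ∏ i, (X - C (s i)) := by
    refine Polynomial.funext fun z => ?_
    have hsum : Tendsto (fun q => (P q).eval z) U (𝓝 (p.eval z)) := by
      rw [eval_eq_sum_range, hp]
      refine Tendsto.congr' ?_ (tendsto_finsetSum (Finset.range (n + 1)) fun i _ =>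
        (hcoef i).mul_const (z ^ i))
      filter_upwards [hP] with q hq
      rw [eval_eq_sum_range, hq]
    have hprod : Tendsto (fun q => (P q).eval z) U
        (𝓝 (p.coeff n * ∏ i, (z - s i))) := by
      refine Tendsto.congr' ?_ ((hcoef n).mul (tendsto_finsetProd Finset.univ fun i _ =>
        tendsto_const_nhds.sub (tendsto_pi_nhds.mp hs' i)))
      filter_upwards [hP, hr] with q hq hqr
      conv_rhs => rw [(IsAlgClosed.splits (P q)).eq_prod_roots, ← hqr]
      rw [leadingCoeff, hq, Multiset.map_map, eval_mul, eval_C, eval_multiset_prod,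
        Multiset.map_map]
      simp [Finset.prod, Function.comp_def]
    simpa [eval_prod] using tendsto_nhds_unique hsum hprod
  have hlead : p.coeff n ≠ 0 := by
    rw [← hp]
    exact leadingCoeff_ne_zero.mpr hp0
  rw [hfactor, roots_C_mul _ hlead]
  simpa [Finset.prod, Multiset.map_map, Function.comp_def] using
    (roots_multiset_prod_X_sub_C ((Finset.univ : Finset (Fin n)).val.map s)).symm

/-- If the coefficients converge, the degree is constant, and the limit polynomial has no root
on the frontier of the open set `D`, then the number of roots in `D` is eventually constant. -/
lemma Polynomial.eventually_countP_roots_eq {ι : Type*} {F : Filter ι} {n : ℕ}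
    {P : ι → ℂ[X]} {p : ℂ[X]} (hP : ∀ᶠ q in F, (P q).natDegree = n) (hp : p.natDegree = n)
    (hp0 : p ≠ 0) (hcoef : ∀ j, Tendsto (fun q => (P q).coeff j) F (𝓝 (p.coeff j)))
    {D : Set ℂ} (hD : IsOpen D) (hfr : ∀ z ∈ frontier D, p.eval z ≠ 0) :
    ∀ᶠ q in F, (P q).roots.countP (· ∈ D) = p.roots.countP (· ∈ D) := by
  have henum : ∀ q, ∃ r : Fin n → ℂ, (P q).natDegree = n →
      (Finset.univ : Finset (Fin n)).val.map r = (P q).roots := by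
    intro q
    by_cases h : (P q).natDegree = n
    · obtain ⟨r, hr⟩ := Multiset.exists_map_univ_fin_eq (P q).roots
        ((IsAlgClosed.card_roots_eq_natDegree).trans h)
      exact ⟨r, fun _ => hr⟩
    · exact ⟨0, fun h' => absurd h' h⟩
  choose r hr using henum
  refine mem_iff_ultrafilter.mpr fun U hU => ?_
  have hrU : ∀ᶠ q in U, (Finset.univ : Finset (Fin n)).val.map (r q) = (P q).roots :=
    (hP.filter_mono hU).mono hr
  obtain ⟨s, hs, hsroots⟩ := exists_tendsto_roots (hP.filter_mono hU) hp hp0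
    (fun j => (hcoef j).mono_left hU) hrU
  have hmem : ∀ᶠ q in U, ∀ i, (r q i ∈ D ↔ s i ∈ D) := by
    refine eventually_all.mpr fun i => ?_
    have hi : Tendsto (fun q => r q i) U (𝓝 (s i)) := tendsto_pi_nhds.mp hs i
    by_cases hsi : s i ∈ D
    · filter_upwards [hi.eventually_mem (hD.mem_nhds hsi)] with q hq
      exact iff_of_true hq hsi
    · have hroot : s i ∈ p.roots := by
        rw [← hsroots]
        exact Multiset.mem_map_of_mem _ (Finset.mem_univ i)
      have hcl : s i ∈ (closure D)ᶜ := fun hc =>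
        hfr (s i) (hD.frontier_eq ▸ ⟨hc, hsi⟩) (isRoot_of_mem_roots hroot)
      filter_upwards [hi.eventually_mem (isClosed_closure.isOpen_compl.mem_nhds hcl)] with q hq
      exact iff_of_false (fun h => hq (subset_closure h)) hsi
  filter_upwards [hrU, hmem] with q hq hqD
  rw [← hq, ← hsroots, Multiset.countP_map, Multiset.countP_map]
  simp only [hqD]

/-- **Invariance of the root count.** For a polynomial family `P` with continuous
coefficients and invariant degree `n` on a connected set `𝒬`, if `P q` never vanishes
on the frontier of the open set `D` for `q ∈ 𝒬`, then the number of roots of `P q`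
in `D`, counted with multiplicity, is the same for all `q ∈ 𝒬`. -/
theorem root_count_invariant (ℓ : ℕ) (𝒬 : Set (Fin ℓ → ℝ))
    (hconn : IsPreconnected 𝒬)
    (D : Set ℂ) (hD : IsOpen D)
    (P : (Fin ℓ → ℝ) → Polynomial ℂ) (n : ℕ)
    (hcoef : ∀ j : ℕ, ContinuousOn (fun q => (P q).coeff j) 𝒬)
    (hdeg : ∀ q ∈ 𝒬, (P q).degree = (n : WithBot ℕ))
    (hfr : ∀ q ∈ 𝒬, ∀ z ∈ frontier D, (P q).eval z ≠ 0) :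
    ∀ q ∈ 𝒬, ∀ q' ∈ 𝒬,
      Multiset.countP (· ∈ D) (P q).roots = Multiset.countP (· ∈ D) (P q').roots := by
  intro q hq q' hq'
  refine hconn.constant (f := fun q => Multiset.countP (· ∈ D) (P q).roots) ?_ hq hq'
  intro q₀ hq₀
  refine tendsto_nhds_of_eventually_eq ?_
  have hnat : ∀ q ∈ 𝒬, (P q).natDegree = n := fun q hq => natDegree_eq_of_degree_eq_some (hdeg q hq)
  have hne : P q₀ ≠ 0 := fun h => by simpa [h] using hdeg q₀ hq₀
  exact eventually_countP_roots_eq (eventually_nhdsWithin_of_forall hnat) (hnat q₀ hq₀) hne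
    (fun j => hcoef j q₀ hq₀) hD (hfr q₀ hq₀)
end

section
/- (Soundness of subdomain elimination) Let f : (Fin ℓ → ℝ) → ℂ, let Q ⊆ (Fin ℓ → ℝ) be convex, and let q⁰ ∈ Q. Suppose q* ∈ Q and k̃ ≥ 0 satisfy f (q⁰ + k̃ • (q* − q⁰)) = 0. If κ ≥ 0 satisfies 0 ∉ convexHull ℝ (f '' (κ-inflation of Q about q⁰)), then κ < k̃. -/
/-- **Soundness of subdomain elimination.** If a destabilizing parameter `q* ∈ Q`
exists at inflation `kt`, and the convex-hull test excludes the origin at inflation `κ`,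
then `κ < kt`. -/
theorem subdomain_elimination_sound (ℓ : ℕ) (f : (Fin ℓ → ℝ) → ℂ)
    (Q : Set (Fin ℓ → ℝ)) (hQ : Convex ℝ Q) (q₀ : Fin ℓ → ℝ) (hq₀ : q₀ ∈ Q)
    (qs : Fin ℓ → ℝ) (hqs : qs ∈ Q) (kt : ℝ) (hkt : 0 ≤ kt)
    (hzero : f (q₀ + kt • (qs - q₀)) = 0)
    (κ : ℝ) (hκ : 0 ≤ κ)
    (hexc : (0 : ℂ) ∉ convexHull ℝ (f '' ((fun q => q₀ + κ • (q - q₀)) '' Q))) :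
    κ < kt := by
  by_contra! hle
  have hmul : κ * (kt / κ) = kt :=
    mul_div_cancel_of_imp' fun h => le_antisymm (h ▸ hle) hkt
  have hmem : q₀ + (kt / κ) • (qs - q₀) ∈ Q :=
    hQ.add_smul_sub_mem hq₀ hqs ⟨div_nonneg hkt hκ, div_le_one_of_le₀ hle hκ⟩
  refine hexc (subset_convexHull ℝ _ ⟨_, ⟨_, hmem, rfl⟩, ?_⟩)
  simpa only [add_sub_cancel_left, smul_smul, hmul] using hzero
end

section
/- (Validity of upper bounds found on subdomains) Let f : (Fin ℓ → ℝ) → ℂ, let 𝒬 ⊆ (Fin ℓ → ℝ) be convex, and let q⁰ ∈ Q ⊆ 𝒬. If k ≥ 0 satisfies 0 ∈ f '' (k-inflation of Q about q⁰), then 0 ∈ f '' (κ-inflation of 𝒬 about q⁰) for every κ ≥ k. -/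
/-- **Validity of upper bounds found on subdomains.** A zero of the value set found on a
subdomain `Q ⊆ 𝒬` at inflation `k` witnesses that the value set of the whole convex
domain `𝒬` contains zero at every inflation `κ ≥ k`. -/
theorem subdomain_upper_bound_valid (ℓ : ℕ) (f : (Fin ℓ → ℝ) → ℂ)
    (𝒬 Q : Set (Fin ℓ → ℝ)) (h𝒬 : Convex ℝ 𝒬) (hQ𝒬 : Q ⊆ 𝒬)
    (q₀ : Fin ℓ → ℝ) (hq₀ : q₀ ∈ Q) (k : ℝ) (hk : 0 ≤ k)
    (h : (0 : ℂ) ∈ f '' ((fun q => q₀ + k • (q - q₀)) '' Q)) :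
    ∀ κ : ℝ, k ≤ κ → (0 : ℂ) ∈ f '' ((fun q => q₀ + κ • (q - q₀)) '' 𝒬) := by
  intro κ hκ
  obtain ⟨_, ⟨q, hq, rfl⟩, hf⟩ := h
  have hκ₀ : 0 ≤ κ := hk.trans hκ
  have hmul : κ * (k / κ) = k :=
    mul_div_cancel_of_imp' fun hzero => le_antisymm (hκ.trans hzero.le) hk
  refine ⟨_, ⟨q₀ + (k / κ) • (q - q₀), ?_, ?_⟩, hf⟩
  · exact h𝒬.add_smul_sub_mem (hQ𝒬 hq₀) (hQ𝒬 hq)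
      ⟨div_nonneg hk hκ₀, div_le_one_of_le₀ hκ hκ₀⟩
  · simp only [add_sub_cancel_left, smul_smul, hmul]
end

section
/- (Attainment of the convex-hull lower bound) Let f : (Fin ℓ → ℝ) → ℂ be continuous, let Q ⊆ (Fin ℓ → ℝ) be compact, and let q⁰ : Fin ℓ → ℝ. If the set S := {κ : ℝ | 0 ≤ κ ∧ 0 ∈ convexHull ℝ (f '' (κ-inflation of Q about q⁰))} is nonempty, then its infimum is attained: sInf S ∈ S. -/
/-- A point of the convex hull of `s` is a convex combination of at most `finrank + 1` points
of `s`. -/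
theorem mem_convexHull_iff_exists_stdSimplex {F : Type*} [AddCommGroup F] [Module ℝ F]
    [FiniteDimensional ℝ F] {s : Set F} {y : F} :
    y ∈ convexHull ℝ s ↔ ∃ n ≤ Module.finrank ℝ F + 1, ∃ w ∈ stdSimplex ℝ (Fin n),
      ∃ z : Fin n → F, (∀ i, z i ∈ s) ∧ ∑ i, w i • z i = y := by
  constructor
  · intro hy
    obtain ⟨ι, _, z, w, hz, haff, hpos, hsum, rfl⟩ := eq_pos_convex_span_of_mem_convexHull hy
    have hcard : Fintype.card ι ≤ Module.finrank ℝ F + 1 :=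
      haff.card_le_finrank_succ.trans (Nat.succ_le_succ (Submodule.finrank_le _))
    let e := (Fintype.equivFin ι).symm
    refine ⟨_, hcard, w ∘ e, ⟨fun i => (hpos _).le, ?_⟩, z ∘ e,
      fun i => hz (Set.mem_range_self _), ?_⟩
    · rw [← hsum]
      exact e.sum_comp w
    · exact e.sum_comp fun i => w i • z i
  · rintro ⟨n, -, w, hw, z, hz, rfl⟩
    exact mem_convexHull_of_exists_fintype w z hw.1 hw.2 hz rfl

/-- For a continuous family of maps `g x` on a compact set `Q`, the parameters `x` at which the
convex hull of `g x '' Q` contains a given point form a closed set. -/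
theorem isClosed_setOf_mem_convexHull_image {X E F : Type*} [TopologicalSpace X]
    [TopologicalSpace E] [AddCommGroup F] [Module ℝ F] [TopologicalSpace F]
    [ContinuousAdd F] [ContinuousSMul ℝ F] [T1Space F] [FiniteDimensional ℝ F]
    {g : X → E → F} (hg : Continuous (Function.uncurry g)) {Q : Set E} (hQ : IsCompact Q)
    (y : F) : IsClosed {x | y ∈ convexHull ℝ (g x '' Q)} := by
  have : CompactSpace Q := isCompact_iff_compactSpace.mp hQ
  have key : {x | y ∈ convexHull ℝ (g x '' Q)} = ⋃ n ∈ Set.Iic (Module.finrank ℝ F + 1),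
      Prod.snd '' {p : (stdSimplex ℝ (Fin n) × (Fin n → Q)) × X |
        ∑ i, (p.1.1 : Fin n → ℝ) i • g p.2 (p.1.2 i) = y} := by
    ext x
    simp only [Set.mem_ofPred_eq, mem_convexHull_iff_exists_stdSimplex, Set.mem_iUnion,
      Set.mem_Iic, Set.mem_image, exists_prop]
    refine exists_congr fun n => and_congr_right fun _ => ⟨?_, ?_⟩
    · rintro ⟨w, hw, z, hz, hsum⟩
      choose q hq hqz using hz
      refine ⟨((⟨w, hw⟩, fun i => ⟨q i, hq i⟩), x), ?_, rfl⟩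
      change ∑ i, w i • g x (q i) = y
      simpa only [hqz] using hsum
    · rintro ⟨⟨⟨w, q⟩, x'⟩, hsum, rfl⟩
      exact ⟨w, w.2, fun i => g x' (q i), fun i => ⟨q i, (q i).2, rfl⟩, hsum⟩
  rw [key]
  refine (Set.finite_Iic _).isClosed_biUnion fun n _ => isClosedMap_snd_of_compactSpace _ ?_
  refine isClosed_singleton.preimage (f := fun p : (stdSimplex ℝ (Fin n) × (Fin n → Q)) × X =>
    ∑ i, (p.1.1 : Fin n → ℝ) i • g p.2 (p.1.2 i)) ?_
  refine continuous_finsetSum _ fun i _ => Continuous.smul ?_ ?_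
  · exact (continuous_apply i).comp (continuous_subtype_val.comp (by fun_prop))
  · exact hg.comp (f := fun p : (stdSimplex ℝ (Fin n) × (Fin n → Q)) × X =>
      (p.2, (p.1.2 i : E))) (by fun_prop)

/-- **Attainment of the convex-hull lower bound.** For `f` continuous and `Q` compact,
the set of nonnegative inflations `κ` at which the convex hull of the value set of the
`κ`-inflated `Q` contains the origin attains its infimum (when nonempty). -/
theorem convexHull_lower_bound_attained (ℓ : ℕ) (f : (Fin ℓ → ℝ) → ℂ)
    (hf : Continuous f) (Q : Set (Fin ℓ → ℝ)) (hQ : IsCompact Q)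
    (q₀ : Fin ℓ → ℝ)
    (hS : {κ : ℝ | 0 ≤ κ ∧
      (0 : ℂ) ∈ convexHull ℝ (f '' ((fun q => q₀ + κ • (q - q₀)) '' Q))}.Nonempty) :
    sInf {κ : ℝ | 0 ≤ κ ∧
        (0 : ℂ) ∈ convexHull ℝ (f '' ((fun q => q₀ + κ • (q - q₀)) '' Q))} ∈
      {κ : ℝ | 0 ≤ κ ∧
        (0 : ℂ) ∈ convexHull ℝ (f '' ((fun q => q₀ + κ • (q - q₀)) '' Q))} := by
  refine IsClosed.csInf_mem ?_ hS ⟨0, fun κ hκ => hκ.1⟩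
  refine isClosed_Ici.inter ?_
  simp only [Set.image_image]
  refine isClosed_setOf_mem_convexHull_image
    (g := fun (κ : ℝ) q => f (q₀ + κ • (q - q₀))) ?_ hQ 0
  exact hf.comp (f := fun p : ℝ × (Fin ℓ → ℝ) => q₀ + p.1 • (p.2 - q₀)) (by fun_prop)
end
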